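/- arXiv:2308.02709 — 4 statements merged into one kernel-verified Lean document; each statement's English description precedes it below -/
import Mathlib

section
/- For every response function value r ∈ R, the outcome of the query is unchanged if non-critical intervention variables are dropped: F_O((q_A, q_I), r) = F_O((q_A, q_{I ∩ C(Q)}), r); consequently R_Q equals R_{Q'}, where Q' is the query with intervention set I ∩ C(Q) in place of I (i.e., P(V_O(V_I = q_I)=q_O | V_A=q_A) = P(V_O(V_{I∩C(Q)} = q_{I∩C(Q)})=q_O | V_A=q_A)). -/
open Classical

/-- A partitioned causal graph on binary variables `V_0, …, V_{n-1}`, listed in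
topologically sorted order.  Indices `< a` form the index set `A` (context
variables, which have no parents and topologically precede the rest), indices
`≥ a` form the index set `B`.  `parents j` is the set of indices of `pa(V_j)`. -/
structure CausalGraph where
  n : ℕ
  a : ℕ
  a_le : a ≤ n
  parents : Fin n → Finset (Fin n)
  sorted : ∀ j i : Fin n, i ∈ parents j → i < j
  noParentsA : ∀ j : Fin n, j.val < a → parents j = ∅

namespace CausalGraph

variable (G : CausalGraph)

/-- Indices of the `A` (context) variables. -/
abbrev AIdx := {i : Fin G.n // i.val < G.a}

/-- Indices of the `B` variables. -/
abbrev BIdx := {i : Fin G.n // G.a ≤ i.val}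

/-- Assignments of binary values to the `A` variables (`{0,1}^{|A|}`). -/
abbrev AAssign := G.AIdx → Bool

/-- Assignments of binary values to the `B` variables (`{0,1}^{|B|}`). -/
abbrev BAssign := G.BIdx → Bool

/-- A family of candidate response functions, one for each node, each reading a
full assignment of all variables. -/
abbrev Resp := Fin G.n → ((Fin G.n → Bool) → Bool)

/-- A response family is admissible when each component depends only on the
values of the parents of the corresponding node.  This encodes membership in
`R = ∏_{j∈B} F_j`, where `F_j` is the set of ALL functions from values of
`pa(V_j)` to `{0,1}`. -/
def IsResponse (r : G.Resp) : Prop :=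
  ∀ j : Fin G.n, ∀ v w : Fin G.n → Bool, (∀ i ∈ G.parents j, v i = w i) → r j v = r j w

/-- The response-function set `R`. -/
def R : Set G.Resp := {r | G.IsResponse r}

/-- One step of evaluation: `A` variables read the context, `B` variables apply
their response functions to the current assignment. -/
def evalStep (r : G.Resp) (vA : G.AAssign) (v : Fin G.n → Bool) : Fin G.n → Bool :=
  fun j => if h : j.val < G.a then vA ⟨j, h⟩ else r j v

/-- Evaluation of all variables from the context `vA` and the response family
`r`, in topological order (realized by `n`-fold iteration of `evalStep`, which
is exact since each parent index precedes its child's index). -/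
def eval (r : G.Resp) (vA : G.AAssign) : Fin G.n → Bool :=
  (G.evalStep r vA)^[G.n] (fun _ => false)

/-- `F_B(v_A, r)`: the values of the `B` variables determined by `v_A` and `r`. -/
def FB (r : G.Resp) (vA : G.AAssign) : G.BAssign := fun j => G.eval r vA j.1

/-- A hyperarc `h : {0,1}^{|A|} → {0,1}^{|B|}`. -/
abbrev Hyperarc := G.AAssign → G.BAssign

/-- `R_h`: the admissible responses consistent with hyperarc `h` on every input. -/
def Rh (h : G.Hyperarc) : Set G.Resp :=
  {r ∈ G.R | ∀ vA : G.AAssign, G.FB r vA = h vA}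

/-- A hyperarc is valid when `R_h ≠ ∅`. -/
def Valid (h : G.Hyperarc) : Prop := (G.Rh h).Nonempty

/-- The set `H` of valid hyperarcs. -/
def H : Set G.Hyperarc := {h | G.Valid h}

/-- `R_{v_B.v_A}`: responses mapping the context `v_A` to the values `v_B` of `V_B`. -/
def RvBvA (vA : G.AAssign) (vB : G.BAssign) : Set G.Resp :=
  {r ∈ G.R | G.FB r vA = vB}

/-- Restriction of a full assignment to the `A` variables. -/
def restrictA (v : Fin G.n → Bool) : G.AAssign := fun i => v i.1

/-- Restriction of a full assignment to the `B` variables. -/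
def restrictB (v : Fin G.n → Bool) : G.BAssign := fun j => v j.1

/-- The full assignment determined by a context `vA` and a hyperarc `h`. -/
def extendA (h : G.Hyperarc) (vA : G.AAssign) : Fin G.n → Bool :=
  fun i => if hi : i.val < G.a then vA ⟨i, hi⟩ else h vA ⟨i, not_lt.mp hi⟩

/-- One step of evaluation under the intervention `do(V_I = q_I)`: the
mechanisms of the intervened variables are ignored. -/
def evalDoStep (I : Finset (Fin G.n)) (qI : Fin G.n → Bool) (r : G.Resp)
    (qA : G.AAssign) (v : Fin G.n → Bool) : Fin G.n → Bool :=
  fun j => if h : j.val < G.a then qA ⟨j, h⟩ else if j ∈ I then qI j else r j v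

/-- Evaluation of all variables under the intervention `do(V_I = q_I)`,
in context `V_A = q_A`, using the response family `r`. -/
def evalDo (I : Finset (Fin G.n)) (qI : Fin G.n → Bool) (r : G.Resp)
    (qA : G.AAssign) : Fin G.n → Bool :=
  (G.evalDoStep I qI r qA)^[G.n] (fun _ => false)

/-- A causal query `P(V_O(V_I = q_I) = q_O | V_A = q_A)`: disjoint sets
`O, I ⊆ B` together with the values `q_A`, `q_I`, `q_O`. -/
structure Query (G : CausalGraph) where
  O : Finset (Fin G.n)
  I : Finset (Fin G.n)
  O_sub : ∀ j ∈ O, G.a ≤ j.val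
  I_sub : ∀ j ∈ I, G.a ≤ j.val
  disjOI : Disjoint O I
  qA : G.AAssign
  qI : Fin G.n → Bool
  qO : Fin G.n → Bool

/-- `R_Q`: the admissible responses consistent with the query, i.e. those with
`F_O((q_A, q_I), r) = q_O`. -/
def RQ (Q : G.Query) : Set G.Resp :=
  {r ∈ G.R | ∀ j ∈ Q.O, G.evalDo Q.I Q.qI r Q.qA j = Q.qO j}

/-- Edges of the mutilated graph `G^{do(V_I = q_I)}` (all edges into `V_I` deleted). -/
def doEdge (I : Finset (Fin G.n)) (i j : Fin G.n) : Prop := j ∉ I ∧ i ∈ G.parents j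

/-- `C(Q)`: the critical variables for the query, i.e. those with a directed
path to some variable of `V_O` in the mutilated graph `G^{do(V_I = q_I)}`. -/
def critical (Q : G.Query) : Set (Fin G.n) :=
  {i | ∃ o ∈ Q.O, Relation.ReflTransGen (G.doEdge Q.I) i o}

/-- An observation `{V_W = q_W}` with `W ⊆ B`, in context `V_A = q_A`. -/
structure Obs (G : CausalGraph) where
  W : Finset (Fin G.n)
  W_sub : ∀ j ∈ W, G.a ≤ j.val
  qA : G.AAssign
  qW : Fin G.n → Bool

/-- `R_W`: the admissible responses consistent with the observation, i.e. those
with `F_W(q_A, r) = q_W`. -/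
def RW (Ob : G.Obs) : Set G.Resp :=
  {r ∈ G.R | ∀ j ∈ Ob.W, G.eval r Ob.qA j = Ob.qW j}

/-- Edges of the causal graph `G` itself. -/
def edge (i j : Fin G.n) : Prop := i ∈ G.parents j

/-- `C(W)`: the critical variables for the observation: the `A`-variables with
a directed path in `G` to some variable of `V_W`. -/
def criticalW (Ob : G.Obs) : Set (Fin G.n) :=
  {i | i.val < G.a ∧ ∃ w ∈ Ob.W, Relation.ReflTransGen G.edge i w}

end CausalGraph

open CausalGraph

/-- The sum `Σ_{x ∈ s} f x` of `f` over a subset `s` of a finite type. -/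
noncomputable def setSum {α : Type*} [Fintype α] (s : Set α) (f : α → ℝ) : ℝ :=
  ∑ x : α, if x ∈ s then f x else 0

/-!
Under `do(V_I = q_I)`, updating `V_j` reads only the tails of the edges into `j` in the mutilated
graph. On a set closed under passing from head to tail, the evaluation therefore depends only on
the part of the intervention that falls inside the set. The critical variables form such a set: a
mutilated edge into a critical variable extends a directed path to `V_O`.
-/

namespace CausalGraph

/-- An ancestral set of the mutilated graph `G^{do(V_I = q_I)}`: one containing the tail of every
edge whose head it contains. On such a set the evaluation is self-contained. -/
def IsDoAncestral (G : CausalGraph) (I : Finset (Fin G.n)) (S : Set (Fin G.n)) : Prop :=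
  ∀ ⦃i j⦄, G.doEdge I i j → j ∈ S → i ∈ S

section Evaluation

variable {G : CausalGraph} {I I' : Finset (Fin G.n)} {q q' v w : Fin G.n → Bool} {r : G.Resp}
  {S : Set (Fin G.n)}

theorem evalDoStep_apply_congr {j : Fin G.n} (hr : r ∈ G.R) (hI : j ∈ I ↔ j ∈ I')
    (hq : j ∈ I → q j = q' j) (hvw : ∀ i, G.doEdge I i j → v i = w i) (qA : G.AAssign) :
    G.evalDoStep I q r qA v j = G.evalDoStep I' q' r qA w j := by
  simp only [evalDoStep, ← hI]
  split_ifs with hA hj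
  · rfl
  · exact hq hj
  · exact hr j v w fun i hi => hvw i ⟨hj, hi⟩

theorem IsDoAncestral.eqOn_evalDoStep (hS : G.IsDoAncestral I S) (hr : r ∈ G.R)
    (hI : ∀ j ∈ S, j ∈ I ↔ j ∈ I') (hq : Set.EqOn q q' (S ∩ I)) (hvw : Set.EqOn v w S)
    (qA : G.AAssign) :
    Set.EqOn (G.evalDoStep I q r qA v) (G.evalDoStep I' q' r qA w) S := fun j hj =>
  evalDoStep_apply_congr hr (hI j hj) (fun hjI => hq ⟨hj, hjI⟩)
    (fun _ hij => hvw (hS hij hj)) qA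

theorem IsDoAncestral.eqOn_evalDo (hS : G.IsDoAncestral I S) (hr : r ∈ G.R)
    (hI : ∀ j ∈ S, j ∈ I ↔ j ∈ I') (hq : Set.EqOn q q' (S ∩ I)) (qA : G.AAssign) :
    Set.EqOn (G.evalDo I q r qA) (G.evalDo I' q' r qA) S := by
  have eqOn_iterate (k : ℕ) (v : Fin G.n → Bool) :
      Set.EqOn ((G.evalDoStep I q r qA)^[k] v) ((G.evalDoStep I' q' r qA)^[k] v) S := by
    induction k with
    | zero => exact Set.eqOn_refl v S
    | succ k ih =>
      simp only [Function.iterate_succ_apply']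
      exact hS.eqOn_evalDoStep hr hI hq ih qA
  exact eqOn_iterate G.n _

end Evaluation

section Critical

variable (G : CausalGraph) (Q : G.Query)

theorem isDoAncestral_critical : G.IsDoAncestral Q.I (G.critical Q) :=
  fun _ _ hij ⟨o, ho, hjo⟩ => ⟨o, ho, hjo.head hij⟩

theorem outcome_subset_critical : ↑Q.O ⊆ G.critical Q :=
  fun o ho => ⟨o, ho, .refl⟩

end Critical

end CausalGraph

/-- For every response function value `r ∈ R`, the outcome of the
query is unchanged if non-critical intervention variables are dropped:
`F_O((q_A, q_I), r) = F_O((q_A, q_{I ∩ C(Q)}), r)`; consequently `R_Q = R_{Q'}`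
where `Q'` uses the intervention set `I ∩ C(Q)` in place of `I`. -/
theorem critical_intervention (G : CausalGraph) (Q : G.Query)
    (I' : Finset (Fin G.n)) (hI' : ∀ i, i ∈ I' ↔ i ∈ Q.I ∧ i ∈ G.critical Q) :
    (∀ r ∈ G.R, ∀ j ∈ Q.O,
        G.evalDo Q.I Q.qI r Q.qA j = G.evalDo I' Q.qI r Q.qA j) ∧
      G.RQ Q = {r ∈ G.R | ∀ j ∈ Q.O, G.evalDo I' Q.qI r Q.qA j = Q.qO j} := by
  have mem_iff (j) (hj : j ∈ G.critical Q) : j ∈ Q.I ↔ j ∈ I' :=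
    ((hI' j).trans (and_iff_left hj)).symm
  have outcome_eq : ∀ r ∈ G.R, ∀ j ∈ Q.O,
      G.evalDo Q.I Q.qI r Q.qA j = G.evalDo I' Q.qI r Q.qA j := fun r hr j hj =>
    (G.isDoAncestral_critical Q).eqOn_evalDo hr mem_iff (Set.eqOn_refl _ _) Q.qA
      (G.outcome_subset_critical Q hj)
  refine ⟨outcome_eq, Set.ext fun r => and_congr_right fun hr => forall₂_congr fun j hj => ?_⟩
  rw [outcome_eq r hr j hj]
end

section
/- (Valid hyperarcs) A hyperarc h is valid (i.e., R_h ≠ ∅) if, and only if, for all a_A, b_A ∈ {0,1}^{|A|}, writing a = (a_A, a_B) with a_B = h(a_A) and b = (b_A, b_B) with b_B = h(b_A), and for every j ∈ B with P_j ⊆ N denoting the indices of pa(V_j): a_{P_j} = b_{P_j} implies a_j = b_j. -/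
open Classical

open CausalGraph

/-!
For an admissible response family `r`, one evaluation step computes the value at `j` from earlier
values only. Iterating it `n` times therefore forgets the initial assignment and reaches the unique
fixed point. Hence `r` realizes the hyperarc `h` iff every `(v_A, h(v_A))` is a fixed point, that
is, iff each `r_j` sends `(v_A, h(v_A))` to `h(v_A)_j`. These conditions are independent for
different `j`, and a function of the parents of `j` meeting the `j`-th one exists iff
`v_A ↦ h(v_A)_j` factors through `v_A ↦ (v_A, h(v_A))_{P_j}`.
-/

open Function

section DependsOn

variable {ι X β : Type*} {α : ι → Type*}

theorem exists_dependsOn_apply_eq_iff [Nonempty β] {s : Set ι} {u : X → ∀ i, α i} {g : X → β} :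
    (∃ f : (∀ i, α i) → β, DependsOn f s ∧ ∀ x, f (u x) = g x) ↔
      ∀ x y, (∀ i ∈ s, u x i = u y i) → g x = g y :=
  calc (∃ f : (∀ i, α i) → β, DependsOn f s ∧ ∀ x, f (u x) = g x)
    _ ↔ ∃ e : (∀ i : s, α i) → β, g = e ∘ (s.domRestrict ∘ u) := by
      simp only [dependsOn_iff_exists_comp]
      constructor
      · rintro ⟨_, ⟨e, rfl⟩, hg⟩
        exact ⟨e, funext fun x ↦ (hg x).symm⟩
      · rintro ⟨e, rfl⟩
        exact ⟨e ∘ s.domRestrict, ⟨e, rfl⟩, fun _ ↦ rfl⟩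
    _ ↔ g.FactorsThrough (s.domRestrict ∘ u) := (factorsThrough_iff g).symm
    _ ↔ ∀ x y, (∀ i ∈ s, u x i = u y i) → g x = g y := by
      simp only [FactorsThrough, comp_apply, funext_iff, Set.domRestrict_apply, Subtype.forall]

variable {T : (∀ i, α i) → ∀ i, α i} {rank : ι → ℕ}

theorem iterate_apply_eq_of_rank_lt
    (hT : ∀ i, DependsOn (fun v ↦ T v i) {j | rank j < rank i}) (v w : ∀ i, α i) {k : ℕ} {i : ι}
    (hi : rank i < k) : T^[k] v i = T^[k] w i := by
  induction k generalizing i with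
  | zero => exact absurd hi (Nat.not_lt_zero _)
  | succ k ih =>
    rw [iterate_succ_apply', iterate_succ_apply']
    exact hT i fun j hj ↦ ih (lt_of_lt_of_le hj (Nat.le_of_lt_succ hi))

theorem iterate_eq_iff_isFixedPt_of_rank_lt
    (hT : ∀ i, DependsOn (fun v ↦ T v i) {j | rank j < rank i}) {k : ℕ} (hk : ∀ i, rank i < k)
    {v w : ∀ i, α i} : T^[k] v = w ↔ IsFixedPt T w := by
  have forget (v w : ∀ i, α i) : T^[k] v = T^[k] w :=
    funext fun i ↦ iterate_apply_eq_of_rank_lt hT v w (hk i)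
  constructor
  · rintro rfl
    calc T (T^[k] v) = T^[k] (T v) := (Commute.self_iterate T k).eq v
      _ = T^[k] v := forget _ _
  · exact fun hw ↦ (forget v w).trans (hw.iterate k)

end DependsOn

namespace CausalGraph

variable {G : CausalGraph} {r : G.Resp} {h : G.Hyperarc} {vA : G.AAssign} {v : Fin G.n → Bool}

theorem isResponse_iff_forall_dependsOn :
    G.IsResponse r ↔ ∀ j, DependsOn (r j) (G.parents j : Set (Fin G.n)) :=
  Iff.rfl

theorem IsResponse.dependsOn_evalStep (hr : G.IsResponse r) (vA : G.AAssign) (j : Fin G.n) :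
    DependsOn (fun v ↦ G.evalStep r vA v j) {i | i.val < j.val} := by
  intro v w hvw
  by_cases hj : j.val < G.a
  · simp only [evalStep, dif_pos hj]
  · simpa only [evalStep, dif_neg hj] using hr j v w fun i hi ↦ hvw i (G.sorted j i hi)

theorem IsResponse.eval_eq_iff_isFixedPt (hr : G.IsResponse r) :
    G.eval r vA = v ↔ IsFixedPt (G.evalStep r vA) v :=
  iterate_eq_iff_isFixedPt_of_rank_lt (hr.dependsOn_evalStep vA) Fin.isLt

theorem isFixedPt_evalStep_iff :
    IsFixedPt (G.evalStep r vA) v ↔ G.restrictA v = vA ∧ ∀ j : G.BIdx, r j v = v j := by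
  constructor
  · intro hv
    refine ⟨funext fun i ↦ ?_, fun j ↦ ?_⟩
    · simpa only [evalStep, restrictA, dif_pos i.2] using (congrFun hv i.1).symm
    · simpa only [evalStep, dif_neg (not_lt.mpr j.2)] using congrFun hv j.1
  · rintro ⟨rfl, hB⟩
    funext j
    by_cases hj : j.val < G.a
    · simp only [evalStep, dif_pos hj, restrictA]
    · simpa only [evalStep, dif_neg hj] using hB ⟨j, not_lt.mp hj⟩

theorem restrictA_extendA : G.restrictA (G.extendA h vA) = vA :=
  funext fun i ↦ dif_pos i.2

theorem restrictB_extendA : G.restrictB (G.extendA h vA) = h vA :=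
  funext fun j ↦ dif_neg (not_lt.mpr j.2)

theorem eq_extendA_iff :
    v = G.extendA h vA ↔ G.restrictA v = vA ∧ G.restrictB v = h vA := by
  constructor
  · rintro rfl
    exact ⟨restrictA_extendA, restrictB_extendA⟩
  · rintro ⟨rfl, hB⟩
    funext i
    by_cases hi : i.val < G.a
    · simp only [extendA, dif_pos hi, restrictA]
    · simp only [extendA, dif_neg hi, ← hB, restrictB]

theorem IsResponse.FB_eq_iff (hr : G.IsResponse r) :
    G.FB r vA = h vA ↔ ∀ j : G.BIdx, r j (G.extendA h vA) = h vA j := by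
  have hA : G.restrictA (G.eval r vA) = vA :=
    (isFixedPt_evalStep_iff.mp (hr.eval_eq_iff_isFixedPt.mp rfl)).1
  calc G.FB r vA = h vA
    _ ↔ G.eval r vA = G.extendA h vA := by rw [eq_extendA_iff, and_iff_right hA]; rfl
    _ ↔ ∀ j : G.BIdx, r j (G.extendA h vA) = G.extendA h vA j := by
      rw [hr.eval_eq_iff_isFixedPt, isFixedPt_evalStep_iff, and_iff_right restrictA_extendA]
    _ ↔ ∀ j : G.BIdx, r j (G.extendA h vA) = h vA j :=
      forall_congr' fun j ↦ by rw [← restrictB_extendA (h := h), restrictB]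

theorem valid_iff_forall_exists_dependsOn :
    G.Valid h ↔ ∀ j : G.BIdx, ∃ f : (Fin G.n → Bool) → Bool,
      DependsOn f (G.parents j : Set (Fin G.n)) ∧
        ∀ vA, f (G.extendA h vA) = h vA j := by
  constructor
  · rintro ⟨r, hr, hFB⟩ j
    exact ⟨r j, isResponse_iff_forall_dependsOn.mp hr j, fun vA ↦ hr.FB_eq_iff.mp (hFB vA) j⟩
  · intro hex
    choose f hf hfh using hex
    let r : G.Resp := fun j ↦ if hj : G.a ≤ j.val then f ⟨j, hj⟩ else fun _ ↦ false
    have hr : G.IsResponse r := isResponse_iff_forall_dependsOn.mpr fun j ↦ by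
      by_cases hj : G.a ≤ j.val
      · simpa only [r, dif_pos hj] using hf ⟨j, hj⟩
      · simpa only [r, dif_neg hj] using (dependsOn_const false).mono (Set.empty_subset _)
    refine ⟨r, hr, fun vA ↦ hr.FB_eq_iff.mpr fun j ↦ ?_⟩
    simpa only [r, dif_pos j.2] using hfh j vA

end CausalGraph

/-- Valid hyperarcs: a hyperarc `h` is valid (`R_h ≠ ∅`) iff for
all `a_A, b_A ∈ {0,1}^{|A|}` — writing `a = (a_A, h(a_A))`, `b = (b_A, h(b_A))` —
and every `j ∈ B`: `a_{P_j} = b_{P_j}` implies `a_j = b_j`. -/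
theorem valid_hyperarc_iff (G : CausalGraph) (h : G.Hyperarc) :
    G.Valid h ↔ ∀ aA bA : G.AAssign, ∀ j : G.BIdx,
      (∀ i ∈ G.parents j.1, G.extendA h aA i = G.extendA h bA i) →
      h aA j = h bA j := by
  calc G.Valid h
    _ ↔ ∀ j : G.BIdx, ∃ f : (Fin G.n → Bool) → Bool, DependsOn f (G.parents j : Set (Fin G.n)) ∧
          ∀ vA, f (G.extendA h vA) = h vA j := valid_iff_forall_exists_dependsOn
    _ ↔ ∀ j : G.BIdx, ∀ aA bA : G.AAssign,
          (∀ i ∈ G.parents j.1, G.extendA h aA i = G.extendA h bA i) → h aA j = h bA j :=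
      forall_congr' fun _ ↦ exists_dependsOn_apply_eq_iff
    _ ↔ _ := ⟨fun compat aA bA j ↦ compat j aA bA, fun compat j aA bA ↦ compat aA bA j⟩
end

section
/- (Equivalence of the original and pruned lower-bound LPs) The optimal value of the original lower-bound LP, min{ Σ_{r ∈ R_Q} q_r : Σ_{r ∈ R_{v_B.v_A}} q_r = p_{v_B.v_A} for all (v_A, v_B), q ≥ 0 }, equals the optimal value of the pruned LP, min{ Σ_{h ∈ H} c_h^L q_h : Σ_{h ∈ H: h(v_A) = v_B} q_h = p_{v_B.v_A} for all (v_A, v_B), q ≥ 0 }, where c_h^L = 1{R_h ⊆ R_Q}. (In particular, one LP is feasible if and only if the other is, and feasible points of one can be mapped to feasible points of the other with equal or no larger objective value.) -/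
open Classical

open CausalGraph

/-!
Both LPs constrain only the law of the hyperarc `F_B(·, r)`, so weights can be moved between them by
pushforward.  Pushing response weights forward along `r ↦ F_B(·, r)` keeps every constraint, and a
hyperarc with `R_h ⊆ R_Q` receives mass only from `R_Q`, so the objective does not increase.
Conversely, push the weight of each valid hyperarc to a single representative of `R_h`, chosen
outside `R_Q` whenever `R_h ⊄ R_Q`: then `R_Q` receives mass only from hyperarcs with `R_h ⊆ R_Q`.
-/

section SetSum

variable {α : Type*} [Fintype α] {s t : Set α} {f : α → ℝ}

theorem setSum_eq_sum_filter : setSum s f = ∑ x with x ∈ s, f x :=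
  (Finset.sum_filter _ _).symm

theorem setSum_nonneg (hf : ∀ x, 0 ≤ f x) : 0 ≤ setSum s f := by
  rw [setSum_eq_sum_filter]
  exact Finset.sum_nonneg fun x _ => hf x

theorem setSum_le_setSum_of_subset (hst : s ⊆ t) (hf : ∀ x, 0 ≤ f x) :
    setSum s f ≤ setSum t f := by
  simp only [setSum_eq_sum_filter]
  exact Finset.sum_le_sum_of_subset_of_nonneg (Finset.monotone_filter_right _ fun _ _ hx => hst hx)
    fun x _ _ => hf x

end SetSum

/-- The feasible region of a linear program whose constraints fix event masses: the nonnegative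
weights whose total over each event `E i` is `p i`. -/
def feasibleWeights {α ι : Type*} [Fintype α] (E : ι → Set α) (p : ι → ℝ) : Set (α → ℝ) :=
  {q | (∀ x, 0 ≤ q x) ∧ ∀ i, setSum (E i) q = p i}

/-- The pushforward along `g` of the weights `q` restricted to `R`, used to carry feasible weights
from one linear program to another. -/
noncomputable def pushforward {α β : Type*} [Fintype α] (R : Set α) (g : α → β) (q : α → ℝ) :
    β → ℝ :=
  fun y => setSum (R ∩ g ⁻¹' {y}) q

section Pushforward

variable {α β ι : Type*} [Fintype α] [Fintype β] {R S : Set α} {T : Set β} {g : α → β}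
  {q : α → ℝ}

theorem setSum_pushforward :
    setSum T (pushforward R g q) = setSum (R ∩ g ⁻¹' T) q := by
  have fiberwise := Finset.sum_fiberwise_eq_sum_filter {x | x ∈ R} {y | y ∈ T} g q
  simpa only [pushforward, setSum_eq_sum_filter, Finset.filter_filter, Finset.mem_filter_univ,
    Set.mem_inter_iff, Set.mem_preimage, Set.mem_singleton_iff] using fiberwise

theorem setSum_pushforward_le (hq : ∀ x, 0 ≤ q x) (hTS : R ∩ g ⁻¹' T ⊆ S) :
    setSum T (pushforward R g q) ≤ setSum S q :=
  setSum_pushforward.trans_le (setSum_le_setSum_of_subset hTS hq)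

theorem pushforward_mem_feasibleWeights {E : ι → Set α} {D : ι → Set β} {p : ι → ℝ}
    (hq : q ∈ feasibleWeights E p) (hDE : ∀ i, R ∩ g ⁻¹' D i = E i) :
    pushforward R g q ∈ feasibleWeights D p := by
  refine ⟨fun y => setSum_nonneg hq.1, fun i => ?_⟩
  rw [setSum_pushforward, hDE, hq.2]

end Pushforward

/-- The points of `g '' R` whose whole fiber in `R` lies in `S`.  For `g = F_B` and `S = R_Q` these
are the valid hyperarcs with lower cost coefficient `c_h^L = 1`. -/
def lowerImage {α β : Type*} (R S : Set α) (g : α → β) : Set β :=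
  {y ∈ g '' R | R ∩ g ⁻¹' {y} ⊆ S}

section Pruning

variable {α β ι : Type*}

theorem inter_preimage_lowerImage_subset (R S : Set α) (g : α → β) :
    R ∩ g ⁻¹' lowerImage R S g ⊆ S :=
  fun _ hx => hx.2.2 ⟨hx.1, rfl⟩

theorem exists_section_image_inter_preimage_subset_lowerImage [Nonempty α] (R S : Set α)
    (g : α → β) :
    ∃ s : β → α, Set.MapsTo s (g '' R) R ∧ Set.RightInvOn s g (g '' R) ∧
      g '' R ∩ s ⁻¹' S ⊆ lowerImage R S g := by
  have representative : ∀ y ∈ g '' R, ∃ x ∈ R, g x = y ∧ (x ∈ S → R ∩ g ⁻¹' {y} ⊆ S) := by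
    rintro _ ⟨x, hx, rfl⟩
    by_cases hS : R ∩ g ⁻¹' {g x} ⊆ S
    · exact ⟨x, hx, rfl, fun _ => hS⟩
    · obtain ⟨x', ⟨hx', hgx'⟩, hx'S⟩ := Set.not_subset.mp hS
      exact ⟨x', hx', hgx', fun h => absurd h hx'S⟩
  choose! s hsR hgs hsS using representative
  exact ⟨s, hsR, hgs, fun y hy => ⟨hy.1, hsS y hy.1 hy.2⟩⟩

variable [Fintype α] [Fintype β]

theorem exists_feasibleWeights_image_setSum_lowerImage_le (R S : Set α) (g : α → β)
    (C : ι → Set β) (p : ι → ℝ) (q : α → ℝ)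
    (hq : q ∈ feasibleWeights (fun i => R ∩ g ⁻¹' C i) p) :
    ∃ q' ∈ feasibleWeights (fun i => g '' R ∩ C i) p,
      setSum (lowerImage R S g) q' ≤ setSum S q := by
  have same_events (i : ι) : R ∩ g ⁻¹' (g '' R ∩ C i) = R ∩ g ⁻¹' C i := by
    rw [Set.preimage_inter, ← Set.inter_assoc,
      Set.inter_eq_left.mpr (Set.subset_preimage_image g R)]
  exact ⟨pushforward R g q, pushforward_mem_feasibleWeights hq same_events,
    setSum_pushforward_le hq.1 (inter_preimage_lowerImage_subset R S g)⟩

theorem exists_feasibleWeights_preimage_setSum_le_lowerImage [Nonempty α] (R S : Set α)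
    (g : α → β) (C : ι → Set β) (p : ι → ℝ) (q : β → ℝ)
    (hq : q ∈ feasibleWeights (fun i => g '' R ∩ C i) p) :
    ∃ q' ∈ feasibleWeights (fun i => R ∩ g ⁻¹' C i) p,
      setSum S q' ≤ setSum (lowerImage R S g) q := by
  obtain ⟨s, hsR, hgs, hsS⟩ := exists_section_image_inter_preimage_subset_lowerImage R S g
  have same_events (i : ι) : g '' R ∩ s ⁻¹' (R ∩ g ⁻¹' C i) = g '' R ∩ C i := by
    ext y
    refine and_congr_right fun hy => ?_
    simp only [Set.mem_preimage, Set.mem_inter_iff, hsR hy, hgs hy, true_and]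
  exact ⟨pushforward (g '' R) s q, pushforward_mem_feasibleWeights hq same_events,
    setSum_pushforward_le hq.1 hsS⟩

theorem pruned_LP_lower_equiv_general [Nonempty α] (R S : Set α) (g : α → β) (C : ι → Set β)
    (p : ι → ℝ) :
    sInf {y | ∃ q ∈ feasibleWeights (fun i => R ∩ g ⁻¹' C i) p, y = setSum S q} =
        sInf {y | ∃ q ∈ feasibleWeights (fun i => g '' R ∩ C i) p,
          y = setSum (lowerImage R S g) q} ∧
      (∀ q ∈ feasibleWeights (fun i => R ∩ g ⁻¹' C i) p,
        ∃ q' ∈ feasibleWeights (fun i => g '' R ∩ C i) p,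
          setSum (lowerImage R S g) q' ≤ setSum S q) ∧
      ∀ q ∈ feasibleWeights (fun i => g '' R ∩ C i) p,
        ∃ q' ∈ feasibleWeights (fun i => R ∩ g ⁻¹' C i) p,
          setSum S q' ≤ setSum (lowerImage R S g) q := by
  have forward := exists_feasibleWeights_image_setSum_lowerImage_le R S g C p
  have backward := exists_feasibleWeights_preimage_setSum_le_lowerImage R S g C p
  refine ⟨csInf_eq_csInf_of_forall_exists_le ?_ ?_, forward, backward⟩
  · rintro _ ⟨q, hq, rfl⟩
    obtain ⟨q', hq', hle⟩ := forward q hq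
    exact ⟨_, ⟨q', hq', rfl⟩, hle⟩
  · rintro _ ⟨q, hq, rfl⟩
    obtain ⟨q', hq', hle⟩ := backward q hq
    exact ⟨_, ⟨q', hq', rfl⟩, hle⟩

end Pruning

namespace CausalGraph

variable (G : CausalGraph)

theorem RvBvA_eq_inter_preimage (vA : G.AAssign) (vB : G.BAssign) :
    G.RvBvA vA vB = G.R ∩ G.FB ⁻¹' {h | h vA = vB} :=
  rfl

theorem Rh_eq_inter_preimage (h : G.Hyperarc) : G.Rh h = G.R ∩ G.FB ⁻¹' {h} := by
  ext r
  simp only [Rh, Set.mem_ofPred_eq, Set.mem_inter_iff, Set.mem_preimage, Set.mem_singleton_iff,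
    funext_iff (f := G.FB r)]

theorem H_eq_image : G.H = G.FB '' G.R := by
  ext h
  simp only [H, Valid, Rh_eq_inter_preimage, Set.mem_ofPred_eq]
  rfl

theorem lowerImage_R_FB (S : Set G.Resp) :
    lowerImage G.R S G.FB = {h ∈ G.H | G.Rh h ⊆ S} := by
  simp only [lowerImage, H_eq_image, Rh_eq_inter_preimage]

end CausalGraph

/-- Equivalence of the original and pruned lower-bound LPs: the
optimal value of `min{ Σ_{r∈R_Q} q_r : Σ_{r∈R_{v_B.v_A}} q_r = p_{v_B.v_A} ∀(v_A,v_B), q ≥ 0 }`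
equals that of `min{ Σ_{h∈H} c_h^L q_h : Σ_{h∈H: h(v_A)=v_B} q_h = p_{v_B.v_A} ∀(v_A,v_B), q ≥ 0 }`
with `c_h^L = 1{R_h ⊆ R_Q}`; moreover feasible points of one map to feasible
points of the other with no larger objective value (so feasibility is equivalent). -/
theorem pruned_LP_lower_equiv (G : CausalGraph) (Q : G.Query)
    (p : G.AAssign → G.BAssign → ℝ) :
    (sInf {y : ℝ | ∃ q : G.Resp → ℝ, (∀ r, 0 ≤ q r) ∧
          (∀ (vA : G.AAssign) (vB : G.BAssign), setSum (G.RvBvA vA vB) q = p vA vB) ∧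
          y = setSum (G.RQ Q) q} =
      sInf {y : ℝ | ∃ qh : G.Hyperarc → ℝ, (∀ h, 0 ≤ qh h) ∧
          (∀ (vA : G.AAssign) (vB : G.BAssign),
            setSum {h ∈ G.H | h vA = vB} qh = p vA vB) ∧
          y = setSum {h ∈ G.H | G.Rh h ⊆ G.RQ Q} qh}) ∧
    (∀ q : G.Resp → ℝ, (∀ r, 0 ≤ q r) →
      (∀ (vA : G.AAssign) (vB : G.BAssign), setSum (G.RvBvA vA vB) q = p vA vB) →
      ∃ qh : G.Hyperarc → ℝ, (∀ h, 0 ≤ qh h) ∧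
        (∀ (vA : G.AAssign) (vB : G.BAssign),
          setSum {h ∈ G.H | h vA = vB} qh = p vA vB) ∧
        setSum {h ∈ G.H | G.Rh h ⊆ G.RQ Q} qh ≤ setSum (G.RQ Q) q) ∧
    (∀ qh : G.Hyperarc → ℝ, (∀ h, 0 ≤ qh h) →
      (∀ (vA : G.AAssign) (vB : G.BAssign),
        setSum {h ∈ G.H | h vA = vB} qh = p vA vB) →
      ∃ q : G.Resp → ℝ, (∀ r, 0 ≤ q r) ∧
        (∀ (vA : G.AAssign) (vB : G.BAssign), setSum (G.RvBvA vA vB) q = p vA vB) ∧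
        setSum (G.RQ Q) q ≤ setSum {h ∈ G.H | G.Rh h ⊆ G.RQ Q} qh) := by
  have equiv := pruned_LP_lower_equiv_general G.R (G.RQ Q) G.FB
    (fun v : G.AAssign × G.BAssign => {h | h v.1 = v.2}) (fun v => p v.1 v.2)
  simpa only [lowerImage_R_FB, ← H_eq_image, ← RvBvA_eq_inter_preimage, Set.inter_ofPred_eq_sep,
    feasibleWeights, Set.mem_ofPred_eq, Prod.forall, and_assoc, and_imp] using equiv
end

section
/- Suppose R_Q ∩ R_W ≠ ∅. Then for any valid hyperarc h ∈ H: R_h ∩ (R_Q ∩ R_W) = ∅ if, and only if, either R_h ∩ R_Q = ∅ or R_h ∩ R_W = ∅. -/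
open Classical

open CausalGraph

/-!
Since `W ⊆ B`, a hyperarc `h` prescribes the observed values, so the responses in `R_h` all lie in
`R_W` or all lie outside it. In the first case intersecting a subset of `R_h` with `R_W` changes
nothing, and in the second case `R_h ∩ R_W` is already empty.
-/

namespace CausalGraph

variable {G : CausalGraph} {h : G.Hyperarc} {r : G.Resp}

theorem eval_eq_of_mem_Rh (hr : r ∈ G.Rh h) (vA : G.AAssign) (j : G.BIdx) :
    G.eval r vA j = h vA j :=
  congrFun (hr.2 vA) j

theorem mem_RW_iff_of_mem_Rh (hr : r ∈ G.Rh h) (Ob : G.Obs) :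
    r ∈ G.RW Ob ↔ ∀ j (hj : j ∈ Ob.W), h Ob.qA ⟨j, Ob.W_sub j hj⟩ = Ob.qW j := by
  refine (and_iff_right hr.1).trans (forall₂_congr fun j hj => ?_)
  rw [← eval_eq_of_mem_Rh hr]

theorem Rh_subset_RW_of_inter_nonempty {Ob : G.Obs} (hW : (G.Rh h ∩ G.RW Ob).Nonempty) :
    G.Rh h ⊆ G.RW Ob := by
  obtain ⟨s, hs, hsW⟩ := hW
  exact fun r hr => (mem_RW_iff_of_mem_Rh hr Ob).2 ((mem_RW_iff_of_mem_Rh hs Ob).1 hsW)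

end CausalGraph

theorem Rh_disjoint_RQ_inter_RW_iff_general {G : CausalGraph} (S : Set G.Resp) (Ob : G.Obs)
    (h : G.Hyperarc) :
    G.Rh h ∩ (S ∩ G.RW Ob) = ∅ ↔ G.Rh h ∩ S = ∅ ∨ G.Rh h ∩ G.RW Ob = ∅ := by
  constructor
  · intro hSW
    refine or_iff_not_imp_right.2 fun hW => ?_
    have hsub : G.Rh h ⊆ G.RW Ob :=
      Rh_subset_RW_of_inter_nonempty (Set.nonempty_iff_ne_empty.2 hW)
    rwa [Set.inter_left_comm, Set.inter_eq_left.2 hsub, Set.inter_comm] at hSW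
  · rintro (hS | hW)
    · exact Set.subset_eq_empty (Set.inter_subset_inter_right _ Set.inter_subset_left) hS
    · exact Set.subset_eq_empty (Set.inter_subset_inter_right _ Set.inter_subset_right) hW

/-- suppose `R_Q ∩ R_W ≠ ∅`.  Then for any valid hyperarc `h ∈ H`:
`R_h ∩ (R_Q ∩ R_W) = ∅` iff `R_h ∩ R_Q = ∅` or `R_h ∩ R_W = ∅`. -/
theorem Rh_disjoint_RQ_inter_RW_iff (G : CausalGraph) (Q : G.Query) (Ob : G.Obs)
    (hqA : Ob.qA = Q.qA)
    (hI : ∀ i ∈ Q.I, i ∈ G.critical Q)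
    (hQW : (G.RQ Q ∩ G.RW Ob).Nonempty)
    (h : G.Hyperarc) (hh : h ∈ G.H) :
    G.Rh h ∩ (G.RQ Q ∩ G.RW Ob) = ∅ ↔
      (G.Rh h ∩ G.RQ Q = ∅ ∨ G.Rh h ∩ G.RW Ob = ∅) :=
  Rh_disjoint_RQ_inter_RW_iff_general (G.RQ Q) Ob h
end
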